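/- (Lax entropy inequalities for 4-shocks) Let f, b, g_l, q_l, g, q be positive real numbers with q·g_l = q_l·g and g·q < g_l·q_l, and set σ₄ = f·b + q_l·(g_l² + g_l·g + g²)/(2g_l). Then f·b + (3/2)·g·q < σ₄ < f·b + (3/2)·g_l·q_l and f·b + g_l·q_l/2 < σ₄; that is, the 4-shock speed σ₄ lies strictly between the fourth characteristic speeds λ₄ = fb + 3gq/2 of the right and left states and exceeds the third characteristic speed λ₃ = fb + g_l q_l/2 of the left state. -/

import Mathlib

/-!
On the 4-shock curve `q * gl = ql * g`, the shock speed relative to `f * b` is half the sum of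
`gl * ql`, `ql * g` and `g * q`. The middle term is the geometric mean of the outer two, so it lies
strictly between them, and each Lax inequality compares this sum term by term with
`3 * (g * q)`, `3 * (gl * ql)` or `gl * ql`.
-/

theorem mem_Ioo_of_mul_self_eq_mul {R : Type*} [Semiring R] [LinearOrder R] [IsStrictOrderedRing R]
    {x y m : R} (hx : 0 < x) (hm : 0 ≤ m) (hxy : x < y) (hmean : m * m = x * y) :
    m ∈ Set.Ioo x y := by
  have hy : 0 < y := hx.trans hxy
  constructor
  · refine lt_of_mul_self_lt_mul_self₀ hm ?_
    calc
      x * x < x * y := mul_lt_mul_of_pos_left hxy hx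
      _ = m * m := hmean.symm
  · refine lt_of_mul_self_lt_mul_self₀ hy.le ?_
    calc
      m * m = x * y := hmean
      _ < y * y := mul_lt_mul_of_pos_right hxy hy

theorem four_shock_relative_speed_eq {K : Type*} [Field K] {gl ql g q : K} (hgl : gl ≠ 0)
    (hqg : q * gl = ql * g) :
    ql * (gl ^ 2 + gl * g + g ^ 2) / (2 * gl) = (gl * ql + ql * g + g * q) / 2 := by
  have hnum : ql * (gl ^ 2 + gl * g + g ^ 2) = (gl * ql + ql * g + g * q) * gl := by
    linear_combination -g * hqg
  rw [hnum, mul_div_mul_right _ _ hgl]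

theorem mul_mem_Ioo_of_four_shock_curve {R : Type*} [CommRing R] [LinearOrder R]
    [IsStrictOrderedRing R] {gl ql g q : R} (hql : 0 < ql) (hg : 0 < g) (hq : 0 < q)
    (hqg : q * gl = ql * g) (hlt : g * q < gl * ql) :
    ql * g ∈ Set.Ioo (g * q) (gl * ql) := by
  have hmean : ql * g * (ql * g) = g * q * (gl * ql) := by
    linear_combination -(ql * g) * hqg
  exact mem_Ioo_of_mul_self_eq_mul (mul_pos hg hq) (mul_pos hql hg).le hlt hmean

theorem lax_inequalities_four_shock_general {K : Type*} [Field K] [LinearOrder K]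
    [IsStrictOrderedRing K] (f b : K) {gl ql g q : K} (hgl : 0 < gl) (hql : 0 < ql) (hg : 0 < g)
    (hqg : q * gl = ql * g) (hlt : g * q < gl * ql) :
    (f * b + 3 / 2 * (g * q) < f * b + ql * (gl ^ 2 + gl * g + g ^ 2) / (2 * gl)) ∧
    (f * b + ql * (gl ^ 2 + gl * g + g ^ 2) / (2 * gl) < f * b + 3 / 2 * (gl * ql)) ∧
    (f * b + gl * ql / 2 < f * b + ql * (gl ^ 2 + gl * g + g ^ 2) / (2 * gl)) := by
  have hq : 0 < q := (mul_pos_iff_of_pos_right hgl).mp (hqg ▸ mul_pos hql hg)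
  obtain ⟨hright, hleft⟩ := mul_mem_Ioo_of_four_shock_curve hql hg hq hqg hlt
  have hpos : 0 < g * q := mul_pos hg hq
  rw [four_shock_relative_speed_eq hgl.ne' hqg]
  refine ⟨?_, ?_, ?_⟩ <;> linarith

/-- Lax entropy inequalities for 4-shocks: if `q/g = q_l/g_l` and
`gq < g_l q_l`, the 4-shock speed
`σ₄ = fb + q_l(g_l² + g_l g + g²)/(2g_l)` satisfies
`λ₄(U) = fb + 3gq/2 < σ₄ < fb + 3 g_l q_l/2 = λ₄(U_l)` and
`λ₃(U_l) = fb + g_l q_l/2 < σ₄`. -/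
theorem lax_inequalities_four_shock (f b gl ql g q : ℝ)
    (hf : 0 < f) (hb : 0 < b) (hgl : 0 < gl) (hql : 0 < ql)
    (hg : 0 < g) (hq : 0 < q)
    (hqg : q * gl = ql * g) (hlt : g * q < gl * ql) :
    (f*b + (3/2) * (g*q) < f*b + ql * (gl^2 + gl*g + g^2) / (2*gl)) ∧
    (f*b + ql * (gl^2 + gl*g + g^2) / (2*gl) < f*b + (3/2) * (gl*ql)) ∧
    (f*b + gl * ql / 2 < f*b + ql * (gl^2 + gl*g + g^2) / (2*gl)) :=
  lax_inequalities_four_shock_general f b hgl hql hg hqg hlt
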